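/- arXiv:1208.0063 — 2 statements merged into one kernel-verified Lean document; each statement's English description precedes it below -/
import Mathlib

section
/- Let a, b be real numbers with 0 ≤ b ≤ a. Define, for α ∈ [0,1], R′(α) = log₂(1 + α·a) and R″(α) = log₂(1 + (1−α)·a) + log₂(1 + b/(1 + a)). Then the supremum over α ∈ [0,1] of min{R′(α), R″(α)} equals log₂( 1 + (1 + a)(a + b) / (2(1 + a) + b) ), and it is attained at α* = (1 + a)(a + b) / (a·(2(1 + a) + b)) when a > 0 (with α* ∈ [0,1]). -/
/-!
Write `T = (1 + a)(a + b)/(2(1 + a) + b)` for the received power claimed to be optimal. As a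
function of the received power `t = α·a`, the first rate `log₂(1 + t)` is increasing and the second,
`log₂(1 + a - t) + log₂(1 + b/(1 + a))`, is decreasing. They agree at `t = T`
(`logb_add_logb_crossing`), so the minimum of the two is at most the common value for every `t`
and equals it at `t = T`. The power `T` is feasible, i.e. `0 ≤ T ≤ a`, because `b ≤ a`.
-/

/-- The two rates cross at received power `(1 + a)(a + b)/(2(1 + a) + b)`. -/
lemma logb_add_logb_crossing {a b : ℝ} (ha : 0 ≤ a) (hb : 0 ≤ b) :
    Real.logb 2 (1 + a - (1 + a) * (a + b) / (2 * (1 + a) + b)) + Real.logb 2 (1 + b / (1 + a))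
      = Real.logb 2 (1 + (1 + a) * (a + b) / (2 * (1 + a) + b)) := by
  have hD : 0 < 2 * (1 + a) + b := by positivity
  have h1 : 1 + a - (1 + a) * (a + b) / (2 * (1 + a) + b)
      = (1 + a) * (2 + a) / (2 * (1 + a) + b) := by
    field_simp
    ring
  rw [h1, ← Real.logb_mul (by positivity) (by positivity)]
  congr 1
  field_simp
  ring

/-- At a power split whose received power is the crossing value, the minimum of the two rates
is their common value. -/
lemma min_rates_eq_of_mul_eq {a b α : ℝ} (ha : 0 ≤ a) (hb : 0 ≤ b)
    (hα : α * a = (1 + a) * (a + b) / (2 * (1 + a) + b)) :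
    min (Real.logb 2 (1 + α * a))
        (Real.logb 2 (1 + (1 - α) * a) + Real.logb 2 (1 + b / (1 + a)))
      = Real.logb 2 (1 + (1 + a) * (a + b) / (2 * (1 + a) + b)) := by
  have h : 1 + (1 - α) * a = 1 + a - (1 + a) * (a + b) / (2 * (1 + a) + b) := by
    rw [← hα]
    ring
  rw [h, logb_add_logb_crossing ha hb, hα, min_self]

lemma min_rates_le {a b α : ℝ} (ha : 0 ≤ a) (hb : 0 ≤ b) (hα : α ∈ Set.Icc (0 : ℝ) 1) :
    min (Real.logb 2 (1 + α * a))
        (Real.logb 2 (1 + (1 - α) * a) + Real.logb 2 (1 + b / (1 + a)))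
      ≤ Real.logb 2 (1 + (1 + a) * (a + b) / (2 * (1 + a) + b)) := by
  have h0 : 0 ≤ α * a := mul_nonneg hα.1 ha
  have h1 : 0 ≤ (1 - α) * a := mul_nonneg (sub_nonneg.2 hα.2) ha
  rcases le_total (α * a) ((1 + a) * (a + b) / (2 * (1 + a) + b)) with h | h
  · exact (min_le_left _ _).trans
      (Real.logb_le_logb_of_le one_lt_two (by linarith) (by linarith))
  · rw [← logb_add_logb_crossing ha hb]
    refine (min_le_right _ _).trans (add_le_add_left ?_ _)
    exact Real.logb_le_logb_of_le one_lt_two (by linarith) (by linarith)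

/-- For reals `0 ≤ b ≤ a`, with `R′(α) = log₂(1 + α·a)` and
`R″(α) = log₂(1 + (1−α)·a) + log₂(1 + b/(1 + a))`, the supremum over `α ∈ [0,1]` of
`min{R′(α), R″(α)}` equals `log₂(1 + (1 + a)(a + b)/(2(1 + a) + b))`, and it is attained
at `α* = (1 + a)(a + b)/(a·(2(1 + a) + b))` when `a > 0` (with `α* ∈ [0,1]`). -/
theorem sSup_min_superposition (a b : ℝ) (hb : 0 ≤ b) (hba : b ≤ a) :
    sSup ((fun α : ℝ => min (Real.logb 2 (1 + α * a))
          (Real.logb 2 (1 + (1 - α) * a) + Real.logb 2 (1 + b / (1 + a)))) ''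
        Set.Icc (0 : ℝ) 1)
      = Real.logb 2 (1 + (1 + a) * (a + b) / (2 * (1 + a) + b)) ∧
    (0 < a →
      (1 + a) * (a + b) / (a * (2 * (1 + a) + b)) ∈ Set.Icc (0 : ℝ) 1 ∧
      min (Real.logb 2 (1 + ((1 + a) * (a + b) / (a * (2 * (1 + a) + b))) * a))
          (Real.logb 2 (1 + (1 - (1 + a) * (a + b) / (a * (2 * (1 + a) + b))) * a)
            + Real.logb 2 (1 + b / (1 + a)))
        = Real.logb 2 (1 + (1 + a) * (a + b) / (2 * (1 + a) + b))) := by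
  have ha : 0 ≤ a := hb.trans hba
  have hopt : 0 < a →
      (1 + a) * (a + b) / (a * (2 * (1 + a) + b)) ∈ Set.Icc (0 : ℝ) 1 ∧
      (1 + a) * (a + b) / (a * (2 * (1 + a) + b)) * a
        = (1 + a) * (a + b) / (2 * (1 + a) + b) := by
    intro hpos
    refine ⟨⟨by positivity, ?_⟩, ?_⟩
    · rw [div_le_one (by positivity)]
      nlinarith
    · field_simp
  refine ⟨?_, fun hpos => ⟨(hopt hpos).1, min_rates_eq_of_mul_eq ha hb (hopt hpos).2⟩⟩
  have hex : ∃ α ∈ Set.Icc (0 : ℝ) 1, α * a = (1 + a) * (a + b) / (2 * (1 + a) + b) := by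
    rcases ha.eq_or_lt with h | h
    -- If `a = 0` then `b = 0`, the crossing value is `0`, and every split attains it.
    · obtain rfl : b = 0 := by linarith
      subst h
      exact ⟨0, by simp, by simp⟩
    · exact ⟨_, hopt h⟩
  obtain ⟨α, hα, hαa⟩ := hex
  refine IsGreatest.csSup_eq ⟨⟨α, hα, min_rates_eq_of_mul_eq ha hb hαa⟩, ?_⟩
  rintro _ ⟨β, hβ, rfl⟩
  exact min_rates_le ha hb hβ
end

section
/- Let a, b be real numbers with 0 ≤ b ≤ a. Then log₂( 1 + (1 + a)(a + b) / (2(1 + a) + b) ) ≥ (1/2)·log₂(1 + a + b); equivalently, ( 1 + (1 + a)(a + b) / (2(1 + a) + b) )² ≥ 1 + a + b. -/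
/-! With `D = 2(1 + a) + b` and `s = a + b`, the squared inequality reduces, after removing
the factor `s / D² ≥ 0`, to `(1 + a)² s ≥ b D`, that is
`(a - b) + (a² - b²) + a² + a³ + a² b ≥ 0`, which is clear from `0 ≤ b ≤ a`.
The logarithmic form follows by monotonicity of `log₂`. -/


/-- For reals `0 ≤ b ≤ a`,
`log₂(1 + (1 + a)(a + b)/(2(1 + a) + b)) ≥ (1/2)·log₂(1 + a + b)`; equivalently,
`(1 + (1 + a)(a + b)/(2(1 + a) + b))² ≥ 1 + a + b`. -/
theorem superposition_rate_ge_half (a b : ℝ) (hb : 0 ≤ b) (hba : b ≤ a) :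
    Real.logb 2 (1 + (1 + a) * (a + b) / (2 * (1 + a) + b))
      ≥ (1 / 2) * Real.logb 2 (1 + a + b) ∧
    (1 + (1 + a) * (a + b) / (2 * (1 + a) + b)) ^ 2 ≥ 1 + a + b := by
  have ha : 0 ≤ a := hb.trans hba
  have hD : 0 < 2 * (1 + a) + b := by linarith
  have hsq : (1 + (1 + a) * (a + b) / (2 * (1 + a) + b)) ^ 2 ≥ 1 + a + b := by
    have key : 0 ≤ (1 + a) ^ 2 * (a + b) - b * (2 * (1 + a) + b) := by
      have h1 : b ^ 2 ≤ a ^ 2 := by gcongr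
      have h2 : 0 ≤ a ^ 2 + a ^ 3 + a ^ 2 * b := by positivity
      nlinarith
    have hdiff : (1 + (1 + a) * (a + b) / (2 * (1 + a) + b)) ^ 2 - (1 + a + b)
        = (a + b) * ((1 + a) ^ 2 * (a + b) - b * (2 * (1 + a) + b))
          / (2 * (1 + a) + b) ^ 2 := by
      field_simp
      ring
    have hnonneg : 0 ≤ (a + b) * ((1 + a) ^ 2 * (a + b) - b * (2 * (1 + a) + b))
          / (2 * (1 + a) + b) ^ 2 :=
      div_nonneg (mul_nonneg (add_nonneg ha hb) key) (sq_nonneg _)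
    linarith
  refine ⟨?_, hsq⟩
  have hlog := Real.logb_le_logb_of_le (b := 2) (by norm_num)
    (by linarith : (0 : ℝ) < 1 + a + b) hsq
  rw [Real.logb_pow] at hlog
  push_cast at hlog
  linarith
end
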